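/- For an odd prime p and nonzero t ∈ F_p, the special orthogonal group SO(g_t) of the binary quadratic form g_t(x,y) = x² − t·y² over F_p is a cyclic group of order p − χ(t), where χ is the quadratic character mod p. -/

import Mathlib

/-- The special orthogonal group of the binary quadratic form
`g_t(x,y) = x² - t y²` over `𝔽_p`: invertible 2×2 matrices of determinant 1
preserving the form. -/
def SOgt (p : ℕ) [Fact p.Prime] (t : ZMod p) :
    Subgroup (Matrix (Fin 2) (Fin 2) (ZMod p))ˣ where
  carrier := {M | ((M : Matrix (Fin 2) (Fin 2) (ZMod p)).det = 1 ∧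
    ∀ v : Fin 2 → ZMod p,
      ((M : Matrix (Fin 2) (Fin 2) (ZMod p)).mulVec v 0) ^ 2
        - t * ((M : Matrix (Fin 2) (Fin 2) (ZMod p)).mulVec v 1) ^ 2
      = (v 0) ^ 2 - t * (v 1) ^ 2)}
  one_mem' := by
    constructor
    · simp
    · intro v; simp
  mul_mem' := by
    rintro A B ⟨hA, hAQ⟩ ⟨hB, hBQ⟩
    constructor
    · simp [Matrix.det_mul, hA, hB]
    · intro v
      rw [Units.val_mul, ← Matrix.mulVec_mulVec]
      rw [hAQ, hBQ]
  inv_mem' := by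
    rintro M ⟨hM, hMQ⟩
    have h : ((M⁻¹ : (Matrix (Fin 2) (Fin 2) (ZMod p))ˣ) : Matrix (Fin 2) (Fin 2) (ZMod p))
        * (M : Matrix (Fin 2) (Fin 2) (ZMod p)) = 1 := by
      rw [← Units.val_mul, inv_mul_cancel, Units.val_one]
    constructor
    · have := congrArg Matrix.det h
      rwa [Matrix.det_mul, hM, mul_one, Matrix.det_one] at this
    · intro v
      have h1 : (M : Matrix (Fin 2) (Fin 2) (ZMod p)).mulVec
          (((M⁻¹ : (Matrix (Fin 2) (Fin 2) (ZMod p))ˣ) : Matrix (Fin 2) (Fin 2) (ZMod p)).mulVec v) = v := by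
        rw [Matrix.mulVec_mulVec, ← Units.val_mul, mul_inv_cancel, Units.val_one, Matrix.one_mulVec]
      have h2 := hMQ (((M⁻¹ : (Matrix (Fin 2) (Fin 2) (ZMod p))ˣ) : Matrix (Fin 2) (Fin 2) (ZMod p)).mulVec v)
      rw [h1] at h2
      exact h2.symm

theorem SOgt_entries {p : ℕ} [Fact p.Prime] (hp : Odd p) {t : ZMod p}
    {M : (Matrix (Fin 2) (Fin 2) (ZMod p))ˣ} (hM : M ∈ SOgt p t) :
    M.val 1 1 = M.val 0 0 ∧ M.val 0 1 = t * M.val 1 0 ∧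
      M.val 0 0 ^ 2 - t * M.val 1 0 ^ 2 = 1 := by
  obtain ⟨hd, hq⟩ := hM
  have h0 := hq ![1, 0]
  have h1 := hq ![0, 1]
  have h2 := hq ![1, 1]
  rw [Matrix.det_fin_two] at hd
  simp [Matrix.mulVec, dotProduct, Fin.sum_univ_two] at h0 h1 h2
  have two : (2 : ZMod p) ≠ 0 := by
    have : Fact (2 < p) := ⟨by
      have := (Fact.out : p.Prime).two_le
      rcases hp with ⟨k, hk⟩
      omega⟩
    intro h
    have h' : ((2 : ℕ) : ZMod p) = 0 := by exact_mod_cast h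
    rw [ZMod.natCast_eq_zero_iff] at h'
    have := Nat.le_of_dvd (by norm_num) h'
    have := (inferInstance : Fact (2 < p)).out
    omega
  generalize M.val 0 0 = a at *
  generalize M.val 0 1 = b at *
  generalize M.val 1 0 = c at *
  generalize M.val 1 1 = d at *
  have h3 : a * b = t * (c * d) := by
    apply mul_left_cancel₀ two
    linear_combination h2 - h0 - h1
  refine ⟨?_, ?_, h0⟩
  · linear_combination (-d) * h0 + a * hd + c * h3
  · linear_combination (-b) * h0 + a * h3 + t * c * hd

/-- The conic. -/
abbrev SOgtConic (p : ℕ) (t : ZMod p) : Type := {x : ZMod p × ZMod p // x.1 ^ 2 - t * x.2 ^ 2 = 1}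

/-- Matrix of a point of the conic. -/
def SOgtMat {p : ℕ} {t : ZMod p} (x : SOgtConic p t) :
    (Matrix (Fin 2) (Fin 2) (ZMod p))ˣ where
  val := !![x.1.1, t * x.1.2; x.1.2, x.1.1]
  inv := !![x.1.1, -(t * x.1.2); -x.1.2, x.1.1]
  val_inv := by
    have := x.2
    ext i j
    fin_cases i <;> fin_cases j <;> simp [Matrix.mul_apply, Fin.sum_univ_two] <;> grind
  inv_val := by
    have := x.2
    ext i j
    fin_cases i <;> fin_cases j <;> simp [Matrix.mul_apply, Fin.sum_univ_two] <;> grind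

/-- Group elements are points of the conic. -/
def SOgtEquiv {p : ℕ} [Fact p.Prime] (hp : Odd p) (t : ZMod p) : SOgt p t ≃ SOgtConic p t where
  toFun M := ⟨(M.1.val 0 0, M.1.val 1 0), (SOgt_entries hp M.2).2.2⟩
  invFun x := ⟨SOgtMat x, by
    have := x.2
    constructor
    · simp [SOgtMat, Matrix.det_fin_two]
      grind
    · intro v
      simp [SOgtMat, Matrix.mulVec, dotProduct, Fin.sum_univ_two]
      linear_combination (v 0 ^ 2 - t * v 1 ^ 2) * this⟩
  left_inv M := by
    obtain ⟨h1, h2, h3⟩ := SOgt_entries hp M.2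
    ext i j
    fin_cases i <;> fin_cases j <;> simp [SOgtMat, h1, h2]
  right_inv x := by
    simp [SOgtMat]

theorem SOgt_two_ne {p : ℕ} [Fact p.Prime] (hp : Odd p) : (2 : ZMod p) ≠ 0 := by
  intro h
  have h' : ((2 : ℕ) : ZMod p) = 0 := by exact_mod_cast h
  rw [ZMod.natCast_eq_zero_iff] at h'
  have := Nat.le_of_dvd (by norm_num) h'
  have := (Fact.out : p.Prime).two_le
  rcases hp with ⟨k, hk⟩
  omega

theorem SOgt_card_sq {p : ℕ} [Fact p.Prime] (hp : Odd p) {s : ZMod p} (hs : s ≠ 0) :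
    Nat.card (SOgtConic p (s * s)) = p - 1 := by
  have two := SOgt_two_ne hp
  rw [← Nat.card_eq_of_bijective
    (fun u : (ZMod p)ˣ => (⟨((u.val + u.val⁻¹) / 2, (u.val - u.val⁻¹) / (2 * s)), by
      have := u.ne_zero
      simp only
      field_simp
      ring⟩ : SOgtConic p (s * s))) ⟨?_, ?_⟩]
  · rw [Nat.card_eq_fintype_card, ZMod.card_units]
  · intro u v h
    simp only [Subtype.mk.injEq, Prod.mk.injEq] at h
    obtain ⟨h1, h2⟩ := h
    have hu := u.ne_zero
    have hv := v.ne_zero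
    ext
    generalize u.val⁻¹ = u' at *
    generalize v.val⁻¹ = v' at *
    field_simp at h1 h2
    apply mul_left_cancel₀ two
    linear_combination h1 + h2
  · rintro ⟨⟨a, b⟩, h⟩
    simp only at h
    have h1 : (a + s * b) * (a - s * b) = 1 := by linear_combination h
    have h2 : (a - s * b) * (a + s * b) = 1 := by linear_combination h
    refine ⟨⟨_, _, h1, h2⟩, ?_⟩
    have h3 : (a + s * b)⁻¹ = a - s * b := inv_eq_of_mul_eq_one_right h1
    ext
    · simp only [h3]
      field_simp
      ring
    · simp only [h3]
      field_simp
      ring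

theorem SOgt_card_nonsq {p : ℕ} [Fact p.Prime] (hp : Odd p) {t : ZMod p} (ht : ¬ IsSquare t) :
    Nat.card (SOgtConic p t) = p + 1 := by
  have two := SOgt_two_ne hp
  have ht0 : t ≠ 0 := by
    rintro rfl
    exact ht IsSquare.zero
  have hm : ∀ m : ZMod p, 1 - t * m ^ 2 ≠ 0 := by
    intro m h
    apply ht
    have hm0 : m ≠ 0 := by
      rintro rfl
      simp at h
    refine ⟨m⁻¹, ?_⟩
    field_simp
    linear_combination -h
  rw [← Nat.card_eq_of_bijective
    (fun u : Option (ZMod p) => (match u with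
      | none => ⟨(-1, 0), by simp⟩
      | some m => ⟨((1 + t * m ^ 2) / (1 - t * m ^ 2), 2 * m / (1 - t * m ^ 2)), by
        have := hm m
        simp only
        field_simp
        ring⟩ : SOgtConic p t)) ⟨?_, ?_⟩]
  · simp
  · have key : ∀ m : ZMod p, (1 + t * m ^ 2) / (1 - t * m ^ 2) ≠ -1 := by
      intro m h
      have := hm m
      rw [div_eq_iff this] at h
      apply two
      linear_combination h
    rintro (_ | m) (_ | n) h
    · rfl
    · simp only [Subtype.mk.injEq, Prod.mk.injEq] at h
      exact absurd h.1.symm (key n)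
    · simp only [Subtype.mk.injEq, Prod.mk.injEq] at h
      exact absurd h.1 (key m)
    · simp only [Subtype.mk.injEq, Prod.mk.injEq] at h
      obtain ⟨h1, h2⟩ := h
      have hm1 := hm m
      have hn1 := hm n
      rw [div_eq_div_iff hm1 hn1] at h1 h2
      have h3 : t * (2 * m ^ 2) = t * (2 * n ^ 2) := by linear_combination h1
      have h4 := mul_left_cancel₀ two (mul_left_cancel₀ ht0
        (h3.trans rfl : t * (2 * m ^ 2) = t * (2 * n ^ 2)))
      congr 1
      apply mul_left_cancel₀ two
      apply mul_right_cancel₀ hn1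
      linear_combination h2 - 2 * n * t * h4
  · rintro ⟨⟨a, b⟩, h⟩
    simp only at h
    by_cases ha : a = -1
    · subst ha
      have hb : b = 0 := by
        have : t * b ^ 2 = 0 := by linear_combination -h
        simpa [ht0] using this
      subst hb
      exact ⟨none, rfl⟩
    · have ha' : 1 + a ≠ 0 := fun h' => ha (by linear_combination h')
      refine ⟨some (b / (1 + a)), ?_⟩
      have h5 := hm (b / (1 + a))
      have h6 : 1 - t * (b / (1 + a)) ^ 2 = 2 / (1 + a) := by
        field_simp
        linear_combination h
      ext
      · simp only [h6]
        field_simp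
        linear_combination -h
      · simp only [h6]
        field_simp

theorem SOgt_cyclic {p : ℕ} [Fact p.Prime] (hp : Odd p) (t : ZMod p) (ht : t ≠ 0) :
    IsCyclic (SOgt p t) := by
  let K := AlgebraicClosure (ZMod p)
  let φ := algebraMap (ZMod p) K
  have hφ : Function.Injective φ := φ.injective
  have two : (2 : K) ≠ 0 := by
    have := (map_ne_zero φ).2 (SOgt_two_ne hp)
    rwa [map_ofNat] at this
  obtain ⟨s, hs⟩ := IsAlgClosed.exists_eq_mul_self (φ t)
  have hs0 : s ≠ 0 := by
    rintro rfl
    exact (map_ne_zero φ).2 ht (by simpa using hs)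
  let f : SOgt p t →* K :=
    { toFun := fun M => φ (M.1.val 0 0) + s * φ (M.1.val 1 0)
      map_one' := by simp
      map_mul' := by
        intro M N
        obtain ⟨h1, h2, -⟩ := SOgt_entries hp M.2
        simp only [Subgroup.coe_mul, Units.val_mul, Matrix.mul_apply, Fin.sum_univ_two, h1, h2,
          map_add, map_mul, hs]
        ring }
  refine isCyclic_of_subgroup_isDomain f ?_
  intro M N h
  have h : φ (M.1.val 0 0) + s * φ (M.1.val 1 0) = φ (N.1.val 0 0) + s * φ (N.1.val 1 0) := h
  have hM := congrArg φ (SOgt_entries hp M.2).2.2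
  have hN := congrArg φ (SOgt_entries hp N.2).2.2
  simp only [map_sub, map_mul, map_pow, map_one, hs] at hM hN
  apply (SOgtEquiv hp t).injective
  have key : φ (M.1.val 0 0) = φ (N.1.val 0 0) ∧ φ (M.1.val 1 0) = φ (N.1.val 1 0) := by
    generalize φ (M.1.val 0 0) = a at *
    generalize φ (M.1.val 1 0) = b at *
    generalize φ (N.1.val 0 0) = c at *
    generalize φ (N.1.val 1 0) = d at *
    have h7 : (a + s * b) ≠ 0 := by
      intro h0
      have : (a + s * b) * (a - s * b) = 1 := by linear_combination hM
      simp [h0] at this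
    have h8 : a - s * b = c - s * d := by
      apply mul_left_cancel₀ h7
      linear_combination hM - hN - (c - s * d) * h
    constructor
    · apply mul_left_cancel₀ two
      linear_combination h + h8
    · apply mul_left_cancel₀ (mul_ne_zero two hs0)
      linear_combination h - h8
  ext
  · exact hφ key.1
  · exact hφ key.2

/-- `SO(g_t)` is cyclic of order `p - χ(t)`. -/
theorem SOgt_cyclic_card (p : ℕ) [Fact p.Prime] (hp : Odd p)
    (t : ZMod p) (ht : t ≠ 0) :
    IsCyclic (SOgt p t) ∧
      (Nat.card (SOgt p t) : ℤ) = (p : ℤ) - (if IsSquare t then 1 else -1) := by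
  refine ⟨SOgt_cyclic hp t ht, ?_⟩
  rw [Nat.card_congr (SOgtEquiv hp t)]
  have hp1 := (Fact.out : p.Prime).one_le
  split_ifs with h
  · obtain ⟨s, rfl⟩ := h
    rw [SOgt_card_sq hp (left_ne_zero_of_mul ht)]
    push_cast [hp1]
    ring
  · rw [SOgt_card_nonsq hp h]
    push_cast
    ring
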